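/- (Convolution formula for the Tutte polynomial of semimatroids.) Let (E,𝒞,r) be a semimatroid. Then, as an identity of polynomials in the two variables t and s, T(𝒞; t, s) = Σ_{X ∈ 𝒞} T(𝒞|X; 0, s) · T(𝒞/X; t, 0). -/

import Mathlib

/-- A semimatroid on a finite ground set `E`: a nonempty, subset-closed collection `C`
of "central" subsets of `E`, together with a rank function `r` satisfying (SR1)-(SR5). -/
structure Semimatroid (E : Type*) [DecidableEq E] [Fintype E] where
  C : Finset (Finset E)
  r : Finset E → ℕ
  C_nonempty : C.Nonempty
  mem_of_subset : ∀ ⦃X Y : Finset E⦄, X ∈ C → Y ⊆ X → Y ∈ C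
  r_le_card : ∀ ⦃X : Finset E⦄, X ∈ C → r X ≤ X.card
  r_mono : ∀ ⦃X Y : Finset E⦄, X ∈ C → Y ∈ C → X ⊆ Y → r X ≤ r Y
  submodular : ∀ ⦃X Y : Finset E⦄, X ∈ C → Y ∈ C → X ∪ Y ∈ C →
    r (X ∩ Y) + r (X ∪ Y) ≤ r X + r Y
  union_mem : ∀ ⦃X Y : Finset E⦄, X ∈ C → Y ∈ C → r X = r (X ∩ Y) → X ∪ Y ∈ C
  augment : ∀ ⦃X Y : Finset E⦄, X ∈ C → Y ∈ C → r X < r Y →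
    ∃ e ∈ Y \ X, insert e X ∈ C

namespace Semimatroid

variable {E : Type*} [DecidableEq E] [Fintype E] (S : Semimatroid E)

/-- The rank `r(𝒞)` of the semimatroid: the common rank of the maximal central sets. -/
def rank : ℕ := S.C.sup S.r

/-- The closure of a central set `X`:
`cl X = {e ∈ E : X ∪ {e} ∈ 𝒞 and r (X ∪ {e}) = r X}`. -/
def cl (X : Finset E) : Finset E :=
  Finset.univ.filter fun e => insert e X ∈ S.C ∧ S.r (insert e X) = S.r X

/-- The flats of the semimatroid: central sets `X` with `cl X = X`. -/
def flats : Finset (Finset E) := S.C.filter fun X => S.cl X = X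

/-- The characteristic polynomial `χ(𝒞;t) = Σ_{X ∈ 𝒞} (−1)^{|X|} t^{r(𝒞)−r(X)}`. -/
noncomputable def charPoly : Polynomial ℤ :=
  ∑ A ∈ S.C, (-1 : Polynomial ℤ) ^ A.card * Polynomial.X ^ (S.rank - S.r A)

end Semimatroid

namespace Semimatroid

variable {E : Type*} [DecidableEq E] [Fintype E] (S : Semimatroid E)

/-- The Tutte polynomial of `𝒞` evaluated at `(t,s)`:
`T(𝒞;t,s) = Σ_{A ∈ 𝒞} (t−1)^{r(𝒞)−r(A)} (s−1)^{|A|−r(A)}`. -/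
def tutteEval (t s : ℤ) : ℤ :=
  ∑ A ∈ S.C, (t - 1) ^ (S.rank - S.r A) * (s - 1) ^ (A.card - S.r A)

/-- The central sets of the restriction `𝒞|X`: `{Y ⊆ X : Y ∈ 𝒞}`. -/
def restCentrals (X : Finset E) : Finset (Finset E) := S.C.filter fun Y => Y ⊆ X

/-- The rank of the restriction `𝒞|X`. -/
def restRank (X : Finset E) : ℕ := (S.restCentrals X).sup S.r

/-- The Tutte polynomial of the restriction `𝒞|X`, evaluated at `(t,s)`. -/
def restTutteEval (X : Finset E) (t s : ℤ) : ℤ :=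
  ∑ Y ∈ S.restCentrals X,
    (t - 1) ^ (S.restRank X - S.r Y) * (s - 1) ^ (Y.card - S.r Y)

/-- The central sets of the contraction `𝒞/X`: `{Y ⊆ E \ X : Y ∪ X ∈ 𝒞}`. -/
def contrCentrals (X : Finset E) : Finset (Finset E) :=
  (Finset.univ \ X).powerset.filter fun Y => Y ∪ X ∈ S.C

/-- The rank of the contraction `𝒞/X`, whose rank function is `Y ↦ r(Y ∪ X) − r(X)`. -/
def contrRank (X : Finset E) : ℕ :=
  (S.contrCentrals X).sup fun Y => S.r (Y ∪ X) - S.r X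

/-- The Tutte polynomial of the contraction `𝒞/X`, evaluated at `(t,s)`. -/
def contrTutteEval (X : Finset E) (t s : ℤ) : ℤ :=
  ∑ Y ∈ S.contrCentrals X,
    (t - 1) ^ (S.contrRank X - (S.r (Y ∪ X) - S.r X)) *
      (s - 1) ^ (Y.card - (S.r (Y ∪ X) - S.r X))

end Semimatroid

namespace Semimatroid

section Helpers

variable {E : Type*} [DecidableEq E] [Fintype E] (S : Semimatroid E)

lemma aux_restRank {X : Finset E} (hX : X ∈ S.C) : S.restRank X = S.r X := by
  unfold restRank restCentrals
  apply le_antisymm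
  · apply Finset.sup_le
    intro Y hY
    rw [Finset.mem_filter] at hY
    exact S.r_mono hY.1 hX hY.2
  · exact Finset.le_sup (f := S.r) (by simp [hX])

lemma aux_exists_top {X : Finset E} (hX : X ∈ S.C) :
    ∃ Z ∈ S.C, X ⊆ Z ∧ S.r Z = S.rank := by
  obtain ⟨Z, hXZ, hZ⟩ := Finset.exists_le_maximal S.C hX
  refine ⟨Z, hZ.1, hXZ, ?_⟩
  apply le_antisymm (Finset.le_sup (f := S.r) hZ.1)
  apply Finset.sup_le
  intro W hW
  by_contra hlt
  push Not at hlt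
  obtain ⟨e, he, hin⟩ := S.augment hZ.1 hW hlt
  have := hZ.2 hin (Finset.subset_insert e Z)
  exact (Finset.mem_sdiff.1 he).2 (this (Finset.mem_insert_self e Z))

lemma aux_contrRank {X : Finset E} (hX : X ∈ S.C) :
    S.contrRank X = S.rank - S.r X := by
  unfold contrRank contrCentrals
  apply le_antisymm
  · apply Finset.sup_le
    intro Y hY
    rw [Finset.mem_filter] at hY
    have : S.r (Y ∪ X) ≤ S.rank := Finset.le_sup (f := S.r) hY.2
    omega
  · obtain ⟨Z, hZ, hXZ, hr⟩ := S.aux_exists_top hX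
    have h : (Z \ X) ∪ X = Z := Finset.sdiff_union_of_subset hXZ
    have := Finset.le_sup (s := (Finset.univ \ X).powerset.filter fun Y => Y ∪ X ∈ S.C)
      (f := fun Y => S.r (Y ∪ X) - S.r X) (b := Z \ X) (by
        rw [Finset.mem_filter, h, Finset.mem_powerset]
        exact ⟨Finset.sdiff_subset_sdiff (Finset.subset_univ _) (le_refl _), hZ⟩)
    simp only [h, hr] at this
    exact this

lemma aux_rank_diff {X Z : Finset E} (hZ : Z ∈ S.C) (hXZ : X ⊆ Z) :
    S.r Z ≤ S.r X + (Z \ X).card := by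
  have hX := S.mem_of_subset hZ hXZ
  have hD : Z \ X ∈ S.C := S.mem_of_subset hZ Finset.sdiff_subset
  have h : X ∪ (Z \ X) = Z := Finset.union_sdiff_of_subset hXZ
  have := S.submodular hX hD (by rw [h]; exact hZ)
  rw [h] at this
  have := S.r_le_card hD
  omega

lemma aux_contr {X : Finset E} (hX : X ∈ S.C) (t : ℤ) :
    S.contrTutteEval X t 0 = ∑ Z ∈ S.C, if X ⊆ Z then
      (t - 1) ^ (S.rank - S.r Z) * (-1) ^ (Z.card + X.card + S.r Z + S.r X) else 0 := by
  rw [← Finset.sum_filter]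
  unfold contrTutteEval
  refine Finset.sum_bij' (fun Y _ => Y ∪ X) (fun Z _ => Z \ X) ?_ ?_ ?_ ?_ ?_
  · intro Y hY
    simp only [contrCentrals, Finset.mem_filter] at hY ⊢
    exact ⟨hY.2, Finset.subset_union_right⟩
  · intro Z hZ
    simp only [contrCentrals, Finset.mem_filter, Finset.mem_powerset] at hZ ⊢
    rw [Finset.sdiff_union_of_subset hZ.2]
    exact ⟨Finset.sdiff_subset_sdiff (Finset.subset_univ _) (le_refl _), hZ.1⟩
  · intro Y hY
    simp only [contrCentrals, Finset.mem_filter, Finset.mem_powerset] at hY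
    have hd : Disjoint Y X := Finset.disjoint_of_subset_left hY.1 Finset.sdiff_disjoint
    exact Finset.union_sdiff_cancel_right hd
  · intro Z hZ
    exact Finset.sdiff_union_of_subset (Finset.mem_filter.1 hZ).2
  · intro Y hY
    simp only [contrCentrals, Finset.mem_filter, Finset.mem_powerset] at hY
    have hd : Disjoint Y X := Finset.disjoint_of_subset_left hY.1 Finset.sdiff_disjoint
    have h1 := S.r_mono hX hY.2 Finset.subset_union_right
    have h2 := S.aux_rank_diff hY.2 (Finset.subset_union_right (s₁ := Y) (s₂ := X))
    rw [Finset.union_sdiff_cancel_right hd] at h2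
    have h3 : S.r (Y ∪ X) ≤ S.rank := Finset.le_sup (f := S.r) hY.2
    rw [S.aux_contrRank hX, Finset.card_union_of_disjoint hd]
    congr 1
    · congr 1
      omega
    · obtain ⟨k, hk⟩ := Nat.exists_eq_add_of_le h2
      obtain ⟨j, hj⟩ := Nat.exists_eq_add_of_le h1
      rw [zero_sub]
      apply neg_one_pow_congr
      rw [Nat.even_iff, Nat.even_iff]
      omega

lemma aux_rest {X : Finset E} (hX : X ∈ S.C) (s : ℤ) :
    S.restTutteEval X 0 s = ∑ Y ∈ S.C, if Y ⊆ X then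
      (-1) ^ (S.r X + S.r Y) * (s - 1) ^ (Y.card - S.r Y) else 0 := by
  rw [← Finset.sum_filter]
  unfold restTutteEval
  apply Finset.sum_congr rfl
  intro Y hY
  rw [restCentrals, Finset.mem_filter] at hY
  have := S.r_mono hY.1 hX hY.2
  rw [S.aux_restRank hX, zero_sub]
  congr 1
  apply neg_one_pow_congr
  rw [Nat.even_iff, Nat.even_iff]
  omega

lemma aux_alt {Y Z : Finset E} (hZ : Z ∈ S.C) :
    (∑ X ∈ S.C, if Y ⊆ X ∧ X ⊆ Z then (-1 : ℤ) ^ X.card else 0)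
      = if Y = Z then (-1) ^ Z.card else 0 := by
  rw [← Finset.sum_filter]
  by_cases hYZ : Y ⊆ Z
  · have : ∑ X ∈ S.C with Y ⊆ X ∧ X ⊆ Z, (-1 : ℤ) ^ X.card
        = ∑ W ∈ (Z \ Y).powerset, (-1 : ℤ) ^ Y.card * (-1 : ℤ) ^ W.card := by
      refine Finset.sum_bij' (fun X _ => X \ Y) (fun W _ => Y ∪ W) ?_ ?_ ?_ ?_ ?_
      · intro X hX
        rw [Finset.mem_filter] at hX
        rw [Finset.mem_powerset]
        exact Finset.sdiff_subset_sdiff hX.2.2 (le_refl _)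
      · intro W hW
        rw [Finset.mem_powerset] at hW
        have : Y ∪ W ⊆ Z := Finset.union_subset hYZ (hW.trans Finset.sdiff_subset)
        rw [Finset.mem_filter]
        exact ⟨S.mem_of_subset hZ this, Finset.subset_union_left, this⟩
      · intro X hX
        rw [Finset.mem_filter] at hX
        exact Finset.union_sdiff_of_subset hX.2.1
      · intro W hW
        rw [Finset.mem_powerset] at hW
        have hd : Disjoint Y W := (Finset.disjoint_of_subset_left hW Finset.sdiff_disjoint).symm
        exact Finset.union_sdiff_cancel_left hd
      · intro X hX
        rw [Finset.mem_filter] at hX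
        rw [← pow_add, add_comm, Finset.card_sdiff_add_card_eq_card hX.2.1]
    rw [this, ← Finset.mul_sum, Finset.sum_powerset_neg_one_pow_card]
    by_cases h : Y = Z
    · simp [h]
    · have : Z \ Y ≠ ∅ := fun h' => h (hYZ.antisymm (Finset.sdiff_eq_empty_iff_subset.1 h'))
      simp [h, this]
  · rw [if_neg (fun h : Y = Z => hYZ h.subset)]
    apply Finset.sum_eq_zero
    intro X hX
    rw [Finset.mem_filter] at hX
    exact absurd (hX.2.1.trans hX.2.2) hYZ

end Helpers

end Semimatroid

/-- **convolution formula for the Tutte polynomial.** For a semimatroid `𝒞`,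
as an identity in the two variables `t` and `s`,
`T(𝒞;t,s) = Σ_{X ∈ 𝒞} T(𝒞|X;0,s) ⋅ T(𝒞/X;t,0)`. -/
theorem Semimatroid.tutte_convolution
    {E : Type*} [DecidableEq E] [Fintype E] (S : Semimatroid E) :
    ∀ t s : ℤ,
      S.tutteEval t s = ∑ X ∈ S.C, S.restTutteEval X 0 s * S.contrTutteEval X t 0 := by
  intro t s
  have key : ∀ X ∈ S.C, S.restTutteEval X 0 s * S.contrTutteEval X t 0
      = ∑ Y ∈ S.C, ∑ Z ∈ S.C, ((s - 1) ^ (Y.card - S.r Y) * (t - 1) ^ (S.rank - S.r Z)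
        * (-1) ^ (Z.card + S.r Z + S.r Y)) *
          (if Y ⊆ X ∧ X ⊆ Z then (-1 : ℤ) ^ X.card else 0) := by
    intro X hX
    rw [S.aux_rest hX, S.aux_contr hX, Finset.sum_mul_sum]
    refine Finset.sum_congr rfl fun Y _ => Finset.sum_congr rfl fun Z _ => ?_
    by_cases h1 : Y ⊆ X <;> by_cases h2 : X ⊆ Z <;> simp only [h1, h2, and_self, and_true,
      and_false, false_and, if_true, if_false, mul_zero, zero_mul]
    have hs : ((-1 : ℤ) ^ S.r X) * (-1) ^ S.r X = 1 := by
      rw [← pow_add]; exact Even.neg_one_pow ⟨_, rfl⟩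
    simp only [pow_add]
    linear_combination ((s - 1) ^ (Y.card - S.r Y) * (t - 1) ^ (S.rank - S.r Z)
        * ((-1) ^ Z.card * (-1) ^ S.r Z * (-1) ^ S.r Y) * (-1 : ℤ) ^ X.card) * hs
  rw [Finset.sum_congr rfl key, Finset.sum_comm]
  unfold Semimatroid.tutteEval
  refine Finset.sum_congr rfl fun Y hY => ?_
  rw [Finset.sum_comm]
  simp only [← Finset.mul_sum]
  rw [Finset.sum_congr rfl fun Z hZ => by rw [S.aux_alt hZ]]
  simp only [mul_ite, mul_zero, Finset.sum_ite_eq, hY, if_true]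
  have hs : ((-1 : ℤ) ^ (Y.card + S.r Y + S.r Y)) * (-1) ^ Y.card = 1 := by
    rw [← pow_add]; exact Even.neg_one_pow ⟨Y.card + S.r Y, by ring⟩
  linear_combination (-(s - 1) ^ (Y.card - S.r Y) * (t - 1) ^ (S.rank - S.r Y)) * hs
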